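/- Let D_A, D₂ ≥ 1 and k ≥ 1 be integers, let μ be the normalized Haar probability measure on the unitary group U(D_A·D₂) acting on ℂ^{D_A} ⊗ ℂ^{D₂}, and let e₁ be a fixed unit vector. Then the k-th moment of the generalized Hilbert–Schmidt ensemble, obtained by tracing out the ℂ^{D₂} factor of a Haar random pure state, equals ∫ (Tr_{D₂}(U |e₁⟩⟨e₁| U†))^{⊗k} dμ(U) = ((D_A D₂ − 1)!/(D_A D₂ + k − 1)!) Σ_{g ∈ S_k} D₂^{l(g)} P_{D_A}(g). -/

import Mathlib

open Matrix MeasureTheory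

/-- The Borel σ-algebra on matrices. -/
noncomputable instance matrixMeasurableSpace {m n : Type*} :
    MeasurableSpace (Matrix m n ℂ) := borel _

/-- Number of cycles of a permutation, counting fixed points as cycles of length 1. -/
def cycleCount {k : ℕ} (g : Equiv.Perm (Fin k)) : ℕ :=
  g.cycleType.card + (k - g.support.card)

/-- The permutation operator `P_D(g)` on `(ℂ^D)^{⊗k}`, defined on the standard tensor basis by
`P_D(g) |i_1,…,i_k⟩ = |i_{g(1)},…,i_{g(k)}⟩`. -/
def permMatrix (D : ℕ) {k : ℕ} (g : Equiv.Perm (Fin k)) :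
    Matrix (Fin k → Fin D) (Fin k → Fin D) ℂ :=
  fun r c => if r = fun a => c (g a) then 1 else 0

/-- The `k`-fold tensor power `M^{⊗k}` of a `D × D` matrix. -/
def tensorPow {D k : ℕ} (M : Matrix (Fin D) (Fin D) ℂ) :
    Matrix (Fin k → Fin D) (Fin k → Fin D) ℂ :=
  fun r c => ∏ a, M (r a) (c a)

/-- Partial trace over the `ℂ^{D₂}` factor of an operator on `ℂ^{D_A} ⊗ ℂ^{D₂}`, defined
entrywise by summing matrix entries diagonal in the `ℂ^{D₂}` index. -/
noncomputable def ptrace {DA D2 : ℕ} (M : Matrix (Fin DA × Fin D2) (Fin DA × Fin D2) ℂ) :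
    Matrix (Fin DA) (Fin DA) ℂ :=
  fun i j => ∑ b : Fin D2, M (i, b) (j, b)

/-!
Write `ψ = U e₁` and `n = D_A D₂`. The moment `∫ (|ψ⟩⟨ψ|)^{⊗k} dμ(U)` and the sum `Σ_g P(g)` are
both invariant under permuting the tensor factors of rows and of columns separately. Such a tensor
`T` is determined by the values `⟨w^{⊗k}| T |w^{⊗k}⟩`, since these are the values at `(w̄, w)` of a
polynomial whose coefficients are, up to multiplicity, the entries of `T`. For the moment the value
is `∫ |⟨w, ψ⟩|^{2k} dμ(U)`, which is `c ‖w‖^{2k}` because left invariance allows `w` to be rotated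
onto an axis; for `Σ_g P(g)` it is `k! ‖w‖^{2k}`. So the two are proportional. The moment has trace
`1`, and by Burnside's lemma `Σ_g P(g)` has trace `n (n + 1) ⋯ (n + k - 1)`. Finally, tracing out
`ℂ^{D₂}` turns `P(g)` into `P_{D_A}(g)` times the number of words `b` in `D₂` letters with
`b = b ∘ g`; these are the words constant on the cycles of `g`, so there are `D₂^{l(g)}` of them.
-/

section Permutations

open Equiv Finset

variable {κ ι : Type*}

theorem eq_comp_perm_iff {g : Perm κ} {b : κ → ι} :
    b = b ∘ g ↔ Perm.SameCycle.setoid g ≤ Setoid.ker b := by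
  constructor
  · rintro hb x _ ⟨n, rfl⟩
    have hfixed := MulAction.mem_fixedBy_zpow (g := DomMulAct.mk g) hb.symm n
    exact (congrFun hfixed x).symm
  · exact fun h => funext fun a => h (Perm.sameCycle_apply_right.mpr (.refl g a))

variable [Fintype κ]

theorem exists_perm_eq_comp_of_card_fiber_eq [DecidableEq ι] {x y : κ → ι}
    (h : ∀ i, #{a | x a = i} = #{a | y a = i}) : ∃ σ : Perm κ, x = y ∘ σ := by
  simp_rw [← Fintype.card_subtype] at h
  exact ⟨ofFiberEquiv fun i => Fintype.equivOfCardEq (h i),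
    funext fun a => (ofFiberEquiv_map _ a).symm⟩

/-- The multiset of values of `x : κ → ι`, i.e. the orbit of `x` under permutations of `κ`. -/
def valueSym (x : κ → ι) : Sym ι (Fintype.card κ) :=
  ⟨univ.val.map x, by simp⟩

theorem valueSym_eq_iff {x y : κ → ι} : valueSym x = valueSym y ↔ ∃ σ : Perm κ, x = y ∘ σ := by
  classical
  constructor
  · intro h
    refine exists_perm_eq_comp_of_card_fiber_eq fun i => ?_
    have hcount := congrArg (Multiset.count i ∘ Subtype.val) h
    simpa [valueSym, Multiset.count_map, card_def, eq_comm]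
      using hcount
  · rintro ⟨σ, rfl⟩
    refine Subtype.ext ?_
    change univ.val.map (y ∘ σ) = univ.val.map y
    rw [← Multiset.map_map, Multiset.map_univ_val_equiv]

theorem valueSym_surjective :
    Function.Surjective (valueSym : (κ → ι) → Sym ι (Fintype.card κ)) := by
  rintro ⟨s, hs⟩
  induction s using Quotient.inductionOn with
  | h l =>
    have hl : Fintype.card κ = l.length := hs.symm
    refine ⟨l.get ∘ Fintype.equivFinOfCardEq hl, Subtype.ext ?_⟩
    change univ.val.map (l.get ∘ Fintype.equivFinOfCardEq hl) = (l : Multiset ι)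
    rw [← Multiset.map_map, Multiset.map_univ_val_equiv, Fin.univ_val_map, List.ofFn_get]

theorem card_orbits_domMulAct_perm [Fintype ι] :
    Nat.card (MulAction.orbitRel.Quotient (Perm κ)ᵈᵐᵃ (κ → ι)) =
      (Fintype.card ι).multichoose (Fintype.card κ) := by
  classical
  have hrel (x y : κ → ι) :
      MulAction.orbitRel (Perm κ)ᵈᵐᵃ (κ → ι) x y ↔ valueSym x = valueSym y := by
    rw [valueSym_eq_iff, MulAction.orbitRel_apply, MulAction.mem_orbit_iff,
      DomMulAct.mk.surjective.exists]
    exact exists_congr fun σ => eq_comm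
  have e : MulAction.orbitRel.Quotient (Perm κ)ᵈᵐᵃ (κ → ι) ≃ Sym ι (Fintype.card κ) :=
    (Quotient.congrRight hrel).trans (Setoid.quotientKerEquivOfSurjective _ valueSym_surjective)
  rw [Nat.card_congr e, Nat.card_eq_fintype_card, Sym.card_sym_eq_multichoose]

theorem sum_card_eq_comp_perm [DecidableEq κ] [Fintype ι] [DecidableEq ι] :
    ∑ g : Perm κ, #{x : κ → ι | x = x ∘ g} = (Fintype.card ι).ascFactorial (Fintype.card κ) := by
  classical
  let _ : Fintype (Perm κ)ᵈᵐᵃ := Fintype.ofEquiv _ DomMulAct.mk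
  have burnside := MulAction.sum_card_fixedBy_eq_card_orbits_mul_card_group (Perm κ)ᵈᵐᵃ (κ → ι)
  rw [← Nat.card_eq_fintype_card, card_orbits_domMulAct_perm,
    Fintype.card_congr DomMulAct.mk.symm, Fintype.card_perm] at burnside
  rw [Nat.ascFactorial_eq_factorial_mul_choose', ← Nat.multichoose_eq, mul_comm, ← burnside]
  refine Fintype.sum_equiv DomMulAct.mk _ _ fun g => ?_
  rw [← Fintype.card_subtype]
  exact Fintype.card_congr (subtypeEquivRight fun x => eq_comm)

theorem card_eq_comp_perm [DecidableEq κ] [Fintype ι] [DecidableEq ι] (g : Perm κ) :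
    #{b : κ → ι | b = b ∘ g} =
      Fintype.card ι ^ Nat.card (Quotient (Perm.SameCycle.setoid g)) := by
  rw [← Fintype.card_subtype, ← Nat.card_eq_fintype_card, ← Nat.card_eq_fintype_card,
    ← Nat.card_fun]
  exact Nat.card_congr ((subtypeEquivRight fun _ => eq_comp_perm_iff).trans (Setoid.liftEquiv _))

theorem card_quotient_sameCycle [DecidableEq κ] (g : Perm κ) :
    Nat.card (Quotient (Perm.SameCycle.setoid g)) =
      g.cycleType.card + (Fintype.card κ - #g.support) := by
  let toCycle (a : κ) : g.cycleFactorsFinset ⊕ (g.supportᶜ : Finset κ) :=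
    if ha : a ∈ g.support then
      .inl ⟨g.cycleOf a, Perm.cycleOf_mem_cycleFactorsFinset_iff.mpr ha⟩
    else .inr ⟨a, mem_compl.mpr ha⟩
  have toCycle_of_mem {a : κ} (ha : a ∈ g.support) :
      toCycle a = .inl ⟨g.cycleOf a, Perm.cycleOf_mem_cycleFactorsFinset_iff.mpr ha⟩ := dif_pos ha
  have toCycle_of_notMem {a : κ} (ha : a ∉ g.support) :
      toCycle a = .inr ⟨a, mem_compl.mpr ha⟩ := dif_neg ha
  have toCycle_surjective : Function.Surjective toCycle := by
    rintro (⟨c, hc⟩ | ⟨a, ha⟩)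
    · obtain ⟨a, ha⟩ := (Perm.mem_cycleFactorsFinset_iff.mp hc).1.nonempty_support
      have hag : a ∈ g.support := Perm.mem_cycleFactorsFinset_support_le hc ha
      exact ⟨a, by simp only [toCycle_of_mem hag, ← Perm.cycle_is_cycleOf ha hc]⟩
    · exact ⟨a, toCycle_of_notMem (mem_compl.mp ha)⟩
  have toCycle_eq_iff (a b : κ) : g.SameCycle a b ↔ toCycle a = toCycle b := by
    by_cases ha : a ∈ g.support <;> by_cases hb : b ∈ g.support
    · rw [toCycle_of_mem ha, toCycle_of_mem hb, Sum.inl.injEq, Subtype.mk.injEq,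
        Perm.sameCycle_iff_cycleOf_eq_of_mem_support ha hb]
    · simp only [toCycle_of_mem ha, toCycle_of_notMem hb, reduceCtorEq, iff_false]
      exact fun h => hb (h.mem_support_iff.mp ha)
    · simp only [toCycle_of_notMem ha, toCycle_of_mem hb, reduceCtorEq, iff_false]
      exact fun h => ha (h.mem_support_iff.mpr hb)
    · rw [toCycle_of_notMem ha, toCycle_of_notMem hb, Sum.inr.injEq, Subtype.mk.injEq]
      exact ⟨fun h => h.eq_of_left (Perm.notMem_support.mp ha), fun h => h.sameCycle g⟩
  have e : Quotient (Perm.SameCycle.setoid g) ≃ g.cycleFactorsFinset ⊕ (g.supportᶜ : Finset κ) :=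
    (Quotient.congrRight toCycle_eq_iff).trans
      (Setoid.quotientKerEquivOfSurjective _ toCycle_surjective)
  rw [Nat.card_congr e, Nat.card_eq_fintype_card, Fintype.card_sum, Fintype.card_coe,
    Fintype.card_coe, card_compl, Perm.cycleType_def, Multiset.card_map, card_def]

theorem card_eq_comp_perm_eq_pow_cycleCount {k : ℕ} [Fintype ι] [DecidableEq ι]
    (g : Perm (Fin k)) :
    #{b : Fin k → ι | b = b ∘ g} = Fintype.card ι ^ cycleCount g := by
  rw [card_eq_comp_perm, card_quotient_sameCycle, Fintype.card_fin, cycleCount]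

variable [DecidableEq κ] [DecidableEq ι]

/-- The number of permutations carrying `y` to `x`, which is the `(x, y)` entry of the sum
`∑ g, P(g)` of all permutation operators. It is stated for words over an arbitrary alphabet `ι`
so that it applies both to `ℂ^{D_A} ⊗ ℂ^{D₂}` and to its first factor. -/
def permMatchCount (x y : κ → ι) : ℕ :=
  #{g : Perm κ | x = y ∘ g}

theorem permMatchCount_comp_left (x y : κ → ι) (σ : Perm κ) :
    permMatchCount (x ∘ σ) y = permMatchCount x y := by
  refine card_equiv (Equiv.mulRight σ⁻¹) fun g => ?_
  simp only [mem_filter, mem_univ, true_and, coe_mulRight, Perm.coe_mul, ← Function.comp_assoc]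
  exact (σ.eq_comp_symm _ _).symm

theorem permMatchCount_comp_right (x y : κ → ι) (σ : Perm κ) :
    permMatchCount x (y ∘ σ) = permMatchCount x y := by
  refine card_equiv (Equiv.mulLeft σ) fun g => ?_
  simp only [mem_filter, mem_univ, true_and, coe_mulLeft, Perm.coe_mul, Function.comp_assoc]

theorem sum_permMatchCount_self [Fintype ι] :
    ∑ x : κ → ι, permMatchCount x x = (Fintype.card ι).ascFactorial (Fintype.card κ) := by
  rw [← sum_card_eq_comp_perm]
  exact sum_card_bipartiteAbove_eq_sum_card_bipartiteBelow _

end Permutations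

section SymmetricTensors

open Equiv Finset MvPolynomial

theorem eq_zero_of_sum_monomial_eq_zero {α σ R : Type*} [Fintype α] [CommSemiring R]
    [CharZero R] [NoZeroDivisors R] {m : α → σ →₀ ℕ} {T : α → R}
    (hT : ∀ p q, m p = m q → T p = T q) (h : ∑ p, monomial (m p) (T p) = 0) (q : α) :
    T q = 0 := by
  classical
  have hcoeff : #{p | m p = m q} • T q = 0 := by
    calc #{p | m p = m q} • T q = ∑ p with m p = m q, T p :=
          (sum_eq_card_nsmul fun p hp => hT p q (mem_filter.mp hp).2).symm
      _ = coeff (m q) (∑ p, monomial (m p) (T p)) := by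
          simp only [coeff_sum, coeff_monomial, sum_filter]
      _ = 0 := by rw [h, coeff_zero]
  rw [nsmul_eq_mul] at hcoeff
  refine (mul_eq_zero.mp hcoeff).resolve_left (Nat.cast_ne_zero.mpr ?_)
  exact card_ne_zero_of_mem (mem_filter.mpr ⟨mem_univ q, rfl⟩)

/-- In the coordinates `z = a - i b`, `w = a + i b` the condition `z = star w` says that `a` and `b`
are real, and a polynomial vanishing at all real points is zero. -/
theorem eq_zero_of_eval_star_self_eq_zero {ι : Type*} {P : MvPolynomial (ι ⊕ ι) ℂ}
    (h : ∀ w : ι → ℂ, eval (Sum.elim (star w) w) P = 0) : P = 0 := by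
  let realCoords : ι ⊕ ι → MvPolynomial (ι ⊕ ι) ℂ :=
    Sum.elim (fun i => X (.inl i) - C Complex.I * X (.inr i))
      (fun i => X (.inl i) + C Complex.I * X (.inr i))
  have eval_realCoords (v : ι ⊕ ι → ℂ) : eval v (bind₁ realCoords P) =
      eval (Sum.elim (fun i => v (.inl i) - Complex.I * v (.inr i))
        (fun i => v (.inl i) + Complex.I * v (.inr i))) P := by
    rw [eval, eval₂Hom_bind₁]
    congr 2
    ext (i | i) <;> simp [realCoords]
  have hreal : bind₁ realCoords P = 0 := by
    refine funext_set (fun _ => Set.range ((↑) : ℝ → ℂ))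
      (fun _ => Set.infinite_range_of_injective Complex.ofReal_injective) fun v hv => ?_
    have star_v (j : ι ⊕ ι) : star (v j) = v j := by
      obtain ⟨t, ht⟩ := hv j (Set.mem_univ j)
      rw [← ht, Complex.star_def, Complex.conj_ofReal]
    rw [eval_realCoords, map_zero, ← h fun i => v (.inl i) + Complex.I * v (.inr i)]
    congr 3
    ext i
    simp [star_v, sub_eq_add_neg, -Complex.star_def]
  refine MvPolynomial.funext fun u => ?_
  have hu := eval_realCoords (Sum.elim (fun i => (u (.inl i) + u (.inr i)) / 2)
    (fun i => (u (.inr i) - u (.inl i)) / (2 * Complex.I)))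
  rw [hreal, map_zero] at hu
  rw [map_zero, hu]
  congr 2
  ext (i | i) <;> simp only [Sum.elim_inl, Sum.elim_inr] <;> field_simp <;> ring

variable {κ ι : Type*} [Fintype κ]

/-- Invariance of a tensor `T`, with row and column indices in `κ → ι`, under permuting the `κ`
tensor factors separately in its rows and in its columns. -/
structure IsBisymmetric (T : (κ → ι) → (κ → ι) → ℂ) : Prop where
  comp_left : ∀ x y (σ : Perm κ), T (x ∘ σ) y = T x y
  comp_right : ∀ x y (σ : Perm κ), T x (y ∘ σ) = T x y

/-- The value `⟨w^{⊗κ}| T |w^{⊗κ}⟩` of the sesquilinear form of `T` on a product vector. -/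
noncomputable def productForm [DecidableEq κ] [Fintype ι] (T : (κ → ι) → (κ → ι) → ℂ)
    (w : ι → ℂ) : ℂ :=
  ∑ x, ∑ y, T x y * ∏ a, star (w (x a)) * w (y a)

theorem isBisymmetric_mul_permMatchCount [DecidableEq κ] [DecidableEq ι] (c : ℂ) :
    IsBisymmetric fun x y : κ → ι => c * permMatchCount x y where
  comp_left x y σ := by rw [permMatchCount_comp_left]
  comp_right x y σ := by rw [permMatchCount_comp_right]

variable [DecidableEq κ] [Fintype ι]

theorem IsBisymmetric.eq_zero_of_productForm_eq_zero {T : (κ → ι) → (κ → ι) → ℂ}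
    (hT : IsBisymmetric T) (h : ∀ w, productForm T w = 0) (x y : κ → ι) : T x y = 0 := by
  classical
  let exponent (p : (κ → ι) × (κ → ι)) : ι ⊕ ι →₀ ℕ :=
    ∑ a, Finsupp.single (.inl (p.1 a)) 1 + ∑ a, Finsupp.single (.inr (p.2 a)) 1
  have exponent_inl (p i) : exponent p (.inl i) = #{a | p.1 a = i} := by
    simp [exponent, Finsupp.single_apply]
  have exponent_inr (p i) : exponent p (.inr i) = #{a | p.2 a = i} := by
    simp [exponent, Finsupp.single_apply]
  have T_eq_of_exponent_eq (p q) (hpq : exponent p = exponent q) : T p.1 p.2 = T q.1 q.2 := by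
    obtain ⟨σ, hσ⟩ := exists_perm_eq_comp_of_card_fiber_eq (x := p.1) (y := q.1) fun i => by
      rw [← exponent_inl, hpq, exponent_inl]
    obtain ⟨τ, hτ⟩ := exists_perm_eq_comp_of_card_fiber_eq (x := p.2) (y := q.2) fun i => by
      rw [← exponent_inr, hpq, exponent_inr]
    rw [hσ, hτ, hT.comp_left, hT.comp_right]
  have eval_monomial_exponent (p w) : eval (Sum.elim (star w) w)
      (monomial (exponent p) (T p.1 p.2)) = T p.1 p.2 * ∏ a, star (w (p.1 a)) * w (p.2 a) := by
    have hmonomial : monomial (exponent p) (T p.1 p.2) =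
        C (T p.1 p.2) * ((∏ a, X (.inl (p.1 a))) * ∏ a, X (.inr (p.2 a))) := by
      simp only [exponent, X, ← monomial_sum_one, monomial_mul, C_mul_monomial, mul_one]
    rw [hmonomial]
    simp [prod_mul_distrib]
  refine eq_zero_of_sum_monomial_eq_zero (T := fun p => T p.1 p.2)
    T_eq_of_exponent_eq (eq_zero_of_eval_star_self_eq_zero fun w => ?_) (x, y)
  rw [map_sum, ← h w, productForm, ← Fintype.sum_prod_type']
  exact Fintype.sum_congr _ _ fun p => eval_monomial_exponent p w

theorem IsBisymmetric.ext_of_productForm_eq {S T : (κ → ι) → (κ → ι) → ℂ}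
    (hS : IsBisymmetric S) (hT : IsBisymmetric T) (h : ∀ w, productForm S w = productForm T w) :
    S = T := by
  have hsub : IsBisymmetric (S - T) :=
    { comp_left x y σ := by simp only [Pi.sub_apply, hS.comp_left, hT.comp_left]
      comp_right x y σ := by simp only [Pi.sub_apply, hS.comp_right, hT.comp_right] }
  refine sub_eq_zero.mp (funext₂ (hsub.eq_zero_of_productForm_eq_zero fun w => ?_))
  simp only [productForm, Pi.sub_apply, sub_mul, sum_sub_distrib] at h ⊢
  exact sub_eq_zero.mpr (h w)

theorem sum_pi_prod_eq_pow {R : Type*} [CommSemiring R] (f : ι → R) :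
    ∑ x : κ → ι, ∏ a, f (x a) = (∑ i, f i) ^ Fintype.card κ := by
  rw [← Fintype.prod_sum, prod_const, card_univ]

theorem productForm_prod_mul_star (v w : ι → ℂ) :
    productForm (fun x y : κ → ι => ∏ a, v (x a) * star (v (y a))) w =
      ((star w ⬝ᵥ v) * star (star w ⬝ᵥ v)) ^ Fintype.card κ := by
  have hstar : star (star w ⬝ᵥ v) = ∑ i, star (v i) * w i := by
    rw [← star_dotProduct_star, star_star]; rfl
  rw [hstar, mul_pow, dotProduct, ← sum_pi_prod_eq_pow, ← sum_pi_prod_eq_pow,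
    sum_mul_sum, productForm]
  refine Fintype.sum_congr _ _ fun x => Fintype.sum_congr _ _ fun y => ?_
  rw [← prod_mul_distrib, ← prod_mul_distrib]
  exact prod_congr rfl fun a _ => by rw [Pi.star_apply]; ring

theorem productForm_mul_permMatchCount [DecidableEq ι] (c : ℂ) (w : ι → ℂ) :
    productForm (fun x y : κ → ι => c * permMatchCount x y) w =
      c * ((Fintype.card κ).factorial * (star w ⬝ᵥ w) ^ Fintype.card κ) := by
  have hmatch (g : Perm κ) (x y : κ → ι) (hxy : x = y ∘ g) :
      ∏ a, star (w (x a)) * w (y a) = ∏ a, star (w (y a)) * w (y a) := by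
    rw [hxy, prod_mul_distrib, prod_mul_distrib]
    exact congrArg (· * _) (Equiv.prod_comp g fun a => star (w (y a)))
  calc productForm (fun x y : κ → ι => c * permMatchCount x y) w
      = ∑ x : κ → ι, ∑ y : κ → ι, ∑ g : Perm κ,
          if x = y ∘ g then c * ∏ a, star (w (y a)) * w (y a) else 0 := by
        refine Fintype.sum_congr _ _ fun x => Fintype.sum_congr _ _ fun y => ?_
        simp only [permMatchCount, card_filter, Nat.cast_sum, mul_sum, sum_mul]
        refine Fintype.sum_congr _ _ fun g => ?_
        split_ifs with hxy
        · rw [hmatch g x y hxy, Nat.cast_one, mul_one]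
        · rw [Nat.cast_zero, mul_zero, zero_mul]
    _ = ∑ y : κ → ι, ∑ _ : Perm κ, c * ∏ a, star (w (y a)) * w (y a) := by
        rw [sum_comm]
        refine Fintype.sum_congr _ _ fun y => ?_
        rw [sum_comm]
        simp only [sum_ite_eq', mem_univ, if_true]
    _ = c * ((Fintype.card κ).factorial * (star w ⬝ᵥ w) ^ Fintype.card κ) := by
        simp only [sum_const, card_univ, Fintype.card_perm, nsmul_eq_mul, ← mul_sum,
          sum_pi_prod_eq_pow fun i => star (w i) * w i, dotProduct, Pi.star_apply]
        ring

end SymmetricTensors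

section UnitaryGroup

variable {ι : Type*} [Fintype ι] [DecidableEq ι]

theorem star_mulVec_dotProduct_mulVec_unitary {R : Type*} [CommRing R] [StarRing R]
    (V : unitaryGroup ι R) (v w : ι → R) :
    star ((V : Matrix ι ι R) *ᵥ v) ⬝ᵥ ((V : Matrix ι ι R) *ᵥ w) = star v ⬝ᵥ w := by
  rw [star_mulVec, ← dotProduct_mulVec, mulVec_mulVec, ← star_eq_conjTranspose,
    mem_unitaryGroup_iff'.mp V.2, one_mulVec]

theorem exists_unitary_mulVec_single_eq {𝕜 : Type*} [RCLike 𝕜] (w : ι → 𝕜) (i : ι) :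
    ∃ (V : unitaryGroup ι 𝕜) (s : 𝕜), (V : Matrix ι ι 𝕜) *ᵥ Pi.single i s = w := by
  obtain rfl | hw := eq_or_ne w 0
  · exact ⟨1, 0, by rw [Pi.single_zero, mulVec_zero]⟩
  let W : EuclideanSpace 𝕜 ι := WithLp.toLp 2 w
  have hW : W ≠ 0 := (WithLp.toLp_eq_zero 2).not.mpr hw
  have hnorm : (‖W‖ : 𝕜) ≠ 0 := RCLike.ofReal_ne_zero.mpr (norm_ne_zero_iff.mpr hW)
  have hu : Orthonormal 𝕜 (({i} : Set ι).domRestrict fun _ => (‖W‖ : 𝕜)⁻¹ • W) :=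
    ⟨fun _ => norm_smul_inv_norm hW, fun _ _ hne => (hne (Subsingleton.elim _ _)).elim⟩
  obtain ⟨b, hb⟩ := hu.exists_orthonormalBasis_extension_of_card_eq finrank_euclideanSpace
  refine ⟨⟨_, (EuclideanSpace.basisFun ι 𝕜).toMatrix_orthonormalBasis_mem_unitary b⟩, ‖W‖, ?_⟩
  ext j
  have hbj : b i j = (‖W‖ : 𝕜)⁻¹ * w j := by rw [hb i rfl]; rfl
  have hmulVec : ((EuclideanSpace.basisFun ι 𝕜).toBasis.toMatrix b *ᵥ Pi.single i (‖W‖ : 𝕜)) j =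
      b i j * ‖W‖ := by simp [Module.Basis.toMatrix_apply]
  rw [hmulVec, hbj, mul_right_comm, inv_mul_cancel₀ hnorm, one_mul]

instance matrixBorelSpace {m n : Type*} : BorelSpace (Matrix m n ℂ) := ⟨rfl⟩

instance unitaryGroupCompactSpace {𝕜 : Type*} [RCLike 𝕜] : CompactSpace (unitaryGroup ι 𝕜) := by
  have hK : IsCompact (Set.univ.pi fun _ : ι => Set.univ.pi fun _ : ι =>
      Metric.closedBall (0 : 𝕜) 1) :=
    isCompact_univ_pi fun _ => isCompact_univ_pi fun _ => isCompact_closedBall 0 1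
  refine isCompact_iff_compactSpace.mp
    (IsCompact.of_isClosed_subset (X := Matrix ι ι 𝕜) hK isClosed_unitary ?_)
  exact fun A hA i _ j _ => mem_closedBall_zero_iff.mpr (entry_norm_bound_of_unitary hA i j)

end UnitaryGroup

section StateMoments

variable {κ ι : Type*} [Fintype κ] [Fintype ι] [DecidableEq ι]

/-- The `(x, y)` entry of the moment `∫ (U |e⟩⟨e| U†)^{⊗κ} dμ(U)` of the random pure state `U e`. -/
noncomputable def stateMoment (μ : Measure (unitaryGroup ι ℂ)) (e : ι → ℂ) (x y : κ → ι) : ℂ :=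
  ∫ U, ∏ a, ((U : Matrix ι ι ℂ) *ᵥ e) (x a) * star (((U : Matrix ι ι ℂ) *ᵥ e) (y a)) ∂μ

theorem integrable_prod_mulVec_mul_star (μ : Measure (unitaryGroup ι ℂ)) [IsFiniteMeasure μ]
    (e : ι → ℂ) (x y : κ → ι) :
    Integrable (fun U : unitaryGroup ι ℂ =>
      ∏ a, ((U : Matrix ι ι ℂ) *ᵥ e) (x a) * star (((U : Matrix ι ι ℂ) *ᵥ e) (y a))) μ := by
  refine Continuous.integrable_of_hasCompactSupport ?_ (.of_compactSpace _)
  have hcont (i : ι) : Continuous fun U : unitaryGroup ι ℂ => ((U : Matrix ι ι ℂ) *ᵥ e) i :=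
    (continuous_apply i).comp (continuous_subtype_val.matrix_mulVec continuous_const)
  exact continuous_finsetProd _ fun a _ => (hcont (x a)).mul (hcont (y a)).star

theorem isBisymmetric_stateMoment (μ : Measure (unitaryGroup ι ℂ)) (e : ι → ℂ) :
    IsBisymmetric (stateMoment (κ := κ) μ e) where
  comp_left x y σ := by
    refine integral_congr_ae (.of_forall fun U => ?_)
    simp only [Finset.prod_mul_distrib]
    exact congrArg (· * _) (Equiv.prod_comp σ fun a => ((U : Matrix ι ι ℂ) *ᵥ e) (x a))
  comp_right x y σ := by
    refine integral_congr_ae (.of_forall fun U => ?_)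
    simp only [Finset.prod_mul_distrib]
    exact congrArg (_ * ·) (Equiv.prod_comp σ fun a => star (((U : Matrix ι ι ℂ) *ᵥ e) (y a)))

variable [DecidableEq κ]

theorem productForm_stateMoment (μ : Measure (unitaryGroup ι ℂ)) [IsFiniteMeasure μ]
    (e w : ι → ℂ) :
    productForm (stateMoment (κ := κ) μ e) w =
      ∫ U, ((star w ⬝ᵥ (U : Matrix ι ι ℂ) *ᵥ e) * star (star w ⬝ᵥ (U : Matrix ι ι ℂ) *ᵥ e)) ^
        Fintype.card κ ∂μ := by
  have hint (x y : κ → ι) := (integrable_prod_mulVec_mul_star μ e x y).mul_const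
    (∏ a, star (w (x a)) * w (y a))
  simp_rw [← productForm_prod_mul_star, productForm]
  rw [integral_finsetSum _ fun x _ => integrable_finsetSum _ fun y _ => hint x y]
  refine Fintype.sum_congr _ _ fun x => ?_
  rw [integral_finsetSum _ fun y _ => hint x y]
  exact Fintype.sum_congr _ _ fun y => (integral_mul_const _ _).symm

theorem productForm_stateMoment_eq_mul_pow (μ : Measure (unitaryGroup ι ℂ)) [IsFiniteMeasure μ]
    [μ.IsMulLeftInvariant] (e w : ι → ℂ) (i : ι) :
    productForm (stateMoment (κ := κ) μ e) w =
      stateMoment (κ := κ) μ e (fun _ => i) (fun _ => i) * (star w ⬝ᵥ w) ^ Fintype.card κ := by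
  obtain ⟨V, s, rfl⟩ := exists_unitary_mulVec_single_eq w i
  rw [productForm_stateMoment, ← integral_mul_left_eq_self _ V,
    star_mulVec_dotProduct_mulVec_unitary, stateMoment, ← integral_mul_const]
  refine integral_congr_ae (.of_forall fun U => ?_)
  simp only [UnitaryGroup.mul_val, ← mulVec_mulVec, star_mulVec_dotProduct_mulVec_unitary,
    ← Pi.single_star, single_dotProduct, Pi.single_eq_same, Finset.prod_const, Finset.card_univ,
    star_mul', star_star, ← mul_pow]
  ring

theorem sum_stateMoment_self (μ : Measure (unitaryGroup ι ℂ)) [IsProbabilityMeasure μ]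
    {e : ι → ℂ} (he : star e ⬝ᵥ e = 1) : ∑ x : κ → ι, stateMoment μ e x x = 1 := by
  have htrace (U : unitaryGroup ι ℂ) : ∑ x : κ → ι, ∏ a,
      ((U : Matrix ι ι ℂ) *ᵥ e) (x a) * star (((U : Matrix ι ι ℂ) *ᵥ e) (x a)) = 1 := by
    rw [sum_pi_prod_eq_pow fun i =>
      ((U : Matrix ι ι ℂ) *ᵥ e) i * star (((U : Matrix ι ι ℂ) *ᵥ e) i)]
    have hnorm := star_mulVec_dotProduct_mulVec_unitary U e e
    rw [he, dotProduct_comm] at hnorm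
    exact (congrArg (· ^ _) hnorm).trans (one_pow _)
  calc ∑ x : κ → ι, stateMoment μ e x x = ∫ _, 1 ∂μ := by
        rw [← integral_congr_ae (.of_forall htrace), integral_finsetSum]
        · rfl
        · exact fun x _ => integrable_prod_mulVec_mul_star μ e x x
    _ = 1 := by rw [integral_const, probReal_univ, one_smul]

theorem stateMoment_eq_mul_permMatchCount (μ : Measure (unitaryGroup ι ℂ)) [IsFiniteMeasure μ]
    [μ.IsMulLeftInvariant] (e : ι → ℂ) (i : ι) :
    stateMoment (κ := κ) μ e = fun x y =>
      stateMoment (κ := κ) μ e (fun _ => i) (fun _ => i) / (Fintype.card κ).factorial *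
        permMatchCount x y := by
  refine (isBisymmetric_stateMoment μ e).ext_of_productForm_eq
    (isBisymmetric_mul_permMatchCount _) fun w => ?_
  rw [productForm_stateMoment_eq_mul_pow μ e w i, productForm_mul_permMatchCount, ← mul_assoc,
    div_mul_cancel₀ _ (Nat.cast_ne_zero.mpr (Nat.factorial_ne_zero _))]

theorem stateMoment_eq_permMatchCount_div (μ : Measure (unitaryGroup ι ℂ)) [IsProbabilityMeasure μ]
    [μ.IsMulLeftInvariant] {e : ι → ℂ} (he : star e ⬝ᵥ e = 1) (x y : κ → ι) :
    stateMoment μ e x y =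
      permMatchCount x y / ((Fintype.card ι).ascFactorial (Fintype.card κ) : ℂ) := by
  obtain ⟨i⟩ : Nonempty ι := by
    by_contra hι
    rw [not_nonempty_iff] at hι
    exact zero_ne_one ((dotProduct_of_isEmpty _ _).symm.trans he)
  have hprop := stateMoment_eq_mul_permMatchCount (κ := κ) μ e i
  have htrace := sum_stateMoment_self (κ := κ) μ he
  set c := stateMoment (κ := κ) μ e (fun _ => i) (fun _ => i) / (Fintype.card κ).factorial
  rw [hprop, ← Finset.mul_sum, ← Nat.cast_sum, sum_permMatchCount_self] at htrace
  rw [congrFun₂ hprop x y, eq_one_div_of_mul_eq_one_left htrace, one_div_mul_eq_div]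

end StateMoments

section PartialTrace

variable {DA D2 k : ℕ}

theorem tensorPow_ptrace_vecMulVec (v w : Fin DA × Fin D2 → ℂ) (r c : Fin k → Fin DA) :
    tensorPow (ptrace (vecMulVec v w)) r c =
      ∑ b : Fin k → Fin D2, ∏ a, v (r a, b a) * w (c a, b a) :=
  Fintype.prod_sum _

theorem integral_tensorPow_ptrace (μ : Measure (unitaryGroup (Fin DA × Fin D2) ℂ))
    [IsFiniteMeasure μ] (e : Fin DA × Fin D2 → ℂ) (r c : Fin k → Fin DA) :
    ∫ U, tensorPow (ptrace ((U : Matrix _ _ ℂ) * vecMulVec e (star e) * (U : Matrix _ _ ℂ)ᴴ))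
        r c ∂μ =
      ∑ b : Fin k → Fin D2, stateMoment μ e (fun a => (r a, b a)) fun a => (c a, b a) := by
  simp_rw [mul_vecMulVec, vecMulVec_mul, ← star_mulVec, tensorPow_ptrace_vecMulVec]
  exact integral_finsetSum _ fun b _ => integrable_prod_mulVec_mul_star μ e _ _

theorem sum_permMatchCount_prodMk (r c : Fin k → Fin DA) :
    (∑ b : Fin k → Fin D2, permMatchCount (fun a => (r a, b a)) fun a => (c a, b a) : ℂ) =
      (∑ g : Equiv.Perm (Fin k), (D2 : ℂ) ^ cycleCount g • permMatrix DA g) r c := by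
  have hpair (g : Equiv.Perm (Fin k)) (b : Fin k → Fin D2) :
      ((fun a => (r a, b a)) = (fun a => (c a, b a)) ∘ g) ↔ r = c ∘ g ∧ b = b ∘ g := by
    simp only [funext_iff, Function.comp_apply, Prod.mk.injEq, forall_and]
  simp only [permMatchCount, Finset.card_filter, hpair, Nat.cast_sum]
  rw [Finset.sum_comm, Matrix.sum_apply]
  refine Fintype.sum_congr _ _ fun g => ?_
  have hcycles := card_eq_comp_perm_eq_pow_cycleCount (ι := Fin D2) g
  rw [Fintype.card_fin] at hcycles
  rw [Matrix.smul_apply, smul_eq_mul, ← Nat.cast_pow, ← hcycles]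
  by_cases hrc : r = c ∘ g
  · have hentry : permMatrix DA g r c = 1 := if_pos hrc
    rw [hentry, mul_one, Finset.card_filter, Nat.cast_sum]
    simp only [hrc, true_and]
  · have hentry : permMatrix DA g r c = 0 := if_neg hrc
    rw [hentry, mul_zero]
    simp only [hrc, false_and, if_false, Nat.cast_zero, Finset.sum_const_zero]

end PartialTrace

theorem factorial_div_factorial_eq_inv_ascFactorial {K : Type*} [Field K] [CharZero K] {n : ℕ}
    (hn : 0 < n) (k : ℕ) :
    ((n - 1).factorial : K) / (n + k - 1).factorial = (n.ascFactorial k : K)⁻¹ := by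
  rw [← Nat.factorial_mul_ascFactorial' n k hn, Nat.cast_mul,
    div_mul_cancel_left₀ (Nat.cast_ne_zero.mpr (Nat.factorial_ne_zero _))]

/-- For `μ` the normalized Haar (left-invariant) probability measure on `U(D_A·D₂)` acting on
`ℂ^{D_A} ⊗ ℂ^{D₂}` and `e₁` a fixed unit vector, the `k`-th moment of the generalized
Hilbert–Schmidt ensemble is
`∫ (Tr_{D₂}(U|e₁⟩⟨e₁|U†))^{⊗k} dμ(U) = ((D_A D₂−1)!/(D_A D₂+k−1)!) Σ_g D₂^{l(g)} P_{D_A}(g)`. -/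
theorem haar_GHS_moment (DA D2 k : ℕ) (hDA : 1 ≤ DA) (hD2 : 1 ≤ D2) (hk : 1 ≤ k)
    (μ : Measure ↥(Matrix.unitaryGroup (Fin DA × Fin D2) ℂ)) [IsProbabilityMeasure μ]
    (hμ : ∀ V : ↥(Matrix.unitaryGroup (Fin DA × Fin D2) ℂ), μ.map (fun U => V * U) = μ)
    (e₁ : Fin DA × Fin D2 → ℂ) (he : star e₁ ⬝ᵥ e₁ = 1) :
    ∀ r c : Fin k → Fin DA,
      (∫ U : ↥(Matrix.unitaryGroup (Fin DA × Fin D2) ℂ),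
          tensorPow (k := k)
            (ptrace ((U : Matrix (Fin DA × Fin D2) (Fin DA × Fin D2) ℂ) *
              vecMulVec e₁ (star e₁) *
              (U : Matrix (Fin DA × Fin D2) (Fin DA × Fin D2) ℂ)ᴴ)) r c ∂μ)
        = (((DA * D2 - 1).factorial : ℂ) / ((DA * D2 + k - 1).factorial : ℂ)) *
            (∑ g : Equiv.Perm (Fin k), (D2 : ℂ) ^ cycleCount g • permMatrix DA g) r c := by
  intro r c
  have : μ.IsMulLeftInvariant := ⟨hμ⟩
  calc
    _ = ∑ b : Fin k → Fin D2, stateMoment μ e₁ (fun a => (r a, b a)) fun a => (c a, b a) :=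
      integral_tensorPow_ptrace μ e₁ r c
    _ = ((DA * D2).ascFactorial k : ℂ)⁻¹ * ∑ b : Fin k → Fin D2,
          (permMatchCount (fun a => (r a, b a)) fun a => (c a, b a) : ℂ) := by
      simp only [stateMoment_eq_permMatchCount_div μ he, Fintype.card_prod, Fintype.card_fin,
        div_eq_inv_mul, Finset.mul_sum]
    _ = _ := by
      rw [sum_permMatchCount_prodMk,
        factorial_div_factorial_eq_inv_ascFactorial (Nat.mul_pos hDA hD2)]
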